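/- arXiv:1909.01516 — 2 statements merged into one kernel-verified Lean document; each statement's English description precedes it below -/
import Mathlib

section
/- (Detectability lemma.) Let H = Σ_{i,j} P_{ij} be a frustration-free Hamiltonian as in the setup, with spectral gap γ, noncommutation degree g, and detectability-lemma operator DL(H). Then for any unit vector ψ orthogonal to the ground space G, ‖DL(H)ψ‖² ≤ 1/(1 + γ/g²). -/
variable {E : Type*} [NormedAddCommGroup E] [InnerProductSpace ℂ E] [FiniteDimensional ℂ E]

/-- An orthogonal projector: a self-adjoint idempotent operator. -/
def IsProjector (P : E →L[ℂ] E) : Prop := IsSelfAdjoint P ∧ P * P = P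

/-- The smallest nonzero (for a positive semidefinite operator, smallest positive)
eigenvalue of an operator. -/
noncomputable def minNonzeroEig (A : E →L[ℂ] E) : ℝ :=
  sInf {c : ℝ | 0 < c ∧ ∃ v : E, v ≠ 0 ∧ A v = (c : ℂ) • v}

/-- The detectability-lemma operator `DL(H) = ∏_{α=1}^{L} ∏_{i ∈ T_α} (1 − P_i)`:
the product of the complementary projectors, taken layer by layer. -/
noncomputable def DLop {ι : Type*} [Fintype ι] [DecidableEq ι] {L : ℕ}
    (P : ι → (E →L[ℂ] E)) (layer : ι → Fin L)
    (hcomm : ∀ i j, layer i = layer j → Commute (P i) (P j)) : E →L[ℂ] E :=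
  ((List.finRange L).map (fun α =>
    (Finset.univ.filter (fun i => layer i = α)).noncommProd (fun i => 1 - P i)
      (fun i hi j hj _ =>
        Commute.sub_left (Commute.one_left _)
          (Commute.sub_right (Commute.one_right _)
            (hcomm i j (by
              simp only [Finset.coe_filter, Set.mem_setOf_eq] at hi hj
              rw [hi.2, hj.2]))))) ).prod

theorem IsProjector.norm_apply_sq {P : E →L[ℂ] E} (h : IsProjector P) (x : E) :
    ‖P x‖ ^ 2 = (inner ℂ (P x) x).re := by
  have hs := (ContinuousLinearMap.isSelfAdjoint_iff_isSymmetric.mp h.1)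
  have h1 : inner ℂ (P (P x)) x = inner ℂ (P x) (P x) := hs (P x) x
  have h2 : P (P x) = P x := by
    have := congrArg (fun T : E →L[ℂ] E => T x) h.2
    simpa using this
  rw [h2] at h1
  rw [h1]
  exact (inner_self_eq_norm_sq (𝕜 := ℂ) (P x)).symm

theorem IsProjector.compl_sq {P : E →L[ℂ] E} (h : IsProjector P) (x : E) :
    ‖x - P x‖ ^ 2 = ‖x‖ ^ 2 - ‖P x‖ ^ 2 := by
  have h1 := h.norm_apply_sq x
  have h2 := norm_sub_sq (𝕜 := ℂ) x (P x)
  have h3 : RCLike.re (inner ℂ x (P x)) = (inner ℂ (P x) x).re := inner_re_symm (𝕜 := ℂ) x (P x)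
  rw [h3] at h2
  linarith

theorem IsProjector.norm_le {P : E →L[ℂ] E} (h : IsProjector P) (x : E) : ‖P x‖ ≤ ‖x‖ := by
  have := h.compl_sq x
  nlinarith [sq_nonneg ‖x - P x‖, norm_nonneg x, norm_nonneg (P x)]

theorem IsProjector.compl_le {P : E →L[ℂ] E} (h : IsProjector P) (x : E) : ‖x - P x‖ ≤ ‖x‖ := by
  have := h.compl_sq x
  nlinarith [sq_nonneg ‖P x‖, norm_nonneg x, norm_nonneg (x - P x)]

theorem core_list {ι : Type*} [Fintype ι] [DecidableEq ι]
    (P : ι → (E →L[ℂ] E)) (hproj : ∀ i, IsProjector (P i)) (N : ι → Finset ι)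
    (hN : ∀ i j, j ≠ i → ¬ Commute (P i) (P j) → j ∈ N i) (ψ : E) (l : List ι) (hl : l.Nodup) :
    ∃ w : ι → ℝ, (∀ j, 0 ≤ w j) ∧ (∀ j, j ∉ l → w j = 0) ∧
      ∑ j, w j ^ 2 = ‖ψ‖ ^ 2 - ‖(l.map (fun i => 1 - P i)).prod ψ‖ ^ 2 ∧
      ∀ i ∈ l, ‖P i ((l.map (fun i => 1 - P i)).prod ψ)‖ ≤ ∑ j ∈ N i, w j := by
  induction l with
  | nil => exact ⟨fun _ => 0, by simp, by simp, by simp, by simp⟩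
  | cons a l ih =>
    rw [List.nodup_cons] at hl
    obtain ⟨w, hw0, hwl, hws, hwi⟩ := ih hl.2
    set φ := (l.map (fun i => 1 - P i)).prod ψ with hφ
    have hprod : ((a :: l).map (fun i => 1 - P i)).prod ψ = φ - P a φ := by
      simp [hφ]
    rw [hprod]
    have hwa := hwl a hl.1
    refine ⟨fun j => w j + if j = a then ‖P a φ‖ else 0, ?_, ?_, ?_, ?_⟩
    · intro j
      have := hw0 j
      dsimp only
      split_ifs <;> positivity
    · intro j hj
      simp only [List.mem_cons, not_or] at hj
      simp [hwl j hj.2, hj.1]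
    · have : ∀ j, (w j + if j = a then ‖P a φ‖ else 0) ^ 2
          = w j ^ 2 + if j = a then ‖P a φ‖ ^ 2 else 0 := by
        intro j
        split_ifs with h
        · subst h; rw [hwa]; ring
        · ring
      simp only [this]
      rw [Finset.sum_add_distrib, hws, (hproj a).compl_sq]
      simp
      ring
    · intro i hi
      have hpos : ∀ j, 0 ≤ w j + if j = a then ‖P a φ‖ else 0 := by
        intro j
        have := hw0 j
        split_ifs <;> positivity
      by_cases hia : i = a
      · subst hia
        have h2 : P i (P i φ) = P i φ := by
          have := congrArg (fun T : E →L[ℂ] E => T φ) (hproj i).2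
          simpa using this
        rw [map_sub, h2, sub_self, norm_zero]
        exact Finset.sum_nonneg (fun j _ => hpos j)
      · have hil : i ∈ l := by simpa [hia] using hi
        have hi1 := hwi i hil
        rw [Finset.sum_add_distrib]
        by_cases hc : Commute (P i) (P a)
        · have h2 : P i (P a φ) = P a (P i φ) := by
            have := congrArg (fun T : E →L[ℂ] E => T φ) hc.eq
            simpa using this
          rw [map_sub, h2]
          have h3 := (hproj a).compl_le (P i φ)
          have h4 : 0 ≤ ∑ j ∈ N i, (if j = a then ‖P a φ‖ else 0) :=
            Finset.sum_nonneg (fun j _ => by split_ifs <;> positivity)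
          linarith
        · have hm := hN i a (fun h => hia h.symm) hc
          rw [map_sub]
          have h3 := norm_sub_le (P i φ) (P i (P a φ))
          have h4 := (hproj i).norm_le (P a φ)
          simp only [Finset.sum_ite_eq', hm, if_true]
          linarith

theorem DLop_eq_list {ι : Type*} [Fintype ι] [DecidableEq ι] {L : ℕ}
    (P : ι → (E →L[ℂ] E)) (layer : ι → Fin L)
    (hcomm : ∀ i j, layer i = layer j → Commute (P i) (P j)) :
    ∃ l : List ι, l.Nodup ∧ (∀ i, i ∈ l) ∧
      DLop P layer hcomm = (l.map (fun i => 1 - P i)).prod := by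
  refine ⟨(List.finRange L).flatMap
    (fun α => (Finset.univ.filter (fun i => layer i = α)).toList), ?_, ?_, ?_⟩
  · rw [List.nodup_flatMap]
    refine ⟨fun α _ => Finset.nodup_toList _, ?_⟩
    refine (List.nodup_finRange L).imp ?_
    intro α β hαβ i h1 h2
    simp at h1 h2
    exact hαβ (h1.symm.trans h2)
  · intro i
    simp
  · unfold DLop
    rw [List.map_flatMap, List.flatMap_def, List.prod_flatten, List.map_map]
    congr 1
    apply List.map_congr_left
    intro α _
    have hh : ∀ (s : Finset ι) (hs : (s : Set ι).Pairwise
        (Function.onFun Commute (fun i => 1 - P i))),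
        s.noncommProd (fun i => 1 - P i) hs = (s.toList.map (fun i => 1 - P i)).prod := by
      intro s hs
      have := Finset.noncommProd_toFinset s.toList (fun i => 1 - P i)
        (by simpa using hs) s.nodup_toList
      rw [← this]
      congr 1
      simp
    exact hh _ _

theorem gap_bound (A : E →L[ℂ] E) (hA : IsSelfAdjoint A)
    (hpos : ∀ x, 0 ≤ (inner ℂ (A x) x).re) (x : E)
    (hx : x ∈ (LinearMap.ker (A : E →ₗ[ℂ] E))ᗮ) :
    minNonzeroEig A * ‖x‖ ^ 2 ≤ (inner ℂ (A x) x).re := by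
  have hs : (A : E →ₗ[ℂ] E).IsSymmetric := ContinuousLinearMap.isSelfAdjoint_iff_isSymmetric.mp hA
  let b := hs.eigenvectorBasis rfl
  let ev := hs.eigenvalues rfl
  have hb : ∀ k, A (b k) = (ev k : ℂ) • b k := fun k => hs.apply_eigenvectorBasis rfl k
  have h1 : inner ℂ (A x) x = ∑ k, (ev k : ℂ) * (‖inner ℂ (b k) x‖ ^ 2 : ℝ) := by
    rw [← b.sum_inner_mul_inner]
    refine Finset.sum_congr rfl fun k _ => ?_
    have : inner ℂ (A x) (b k) = inner ℂ x (A (b k)) := hs x (b k)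
    rw [this, hb, inner_smul_right, mul_assoc]
    congr 1
    rw [← inner_conj_symm x (b k), Complex.conj_mul']
    push_cast
    rfl
  have h1' : (inner ℂ (A x) x).re = ∑ k, ev k * ‖inner ℂ (b k) x‖ ^ 2 := by
    rw [h1, Complex.re_sum]
    refine Finset.sum_congr rfl fun k _ => ?_
    rw [← Complex.ofReal_mul, Complex.ofReal_re]
  rw [h1', ← b.sum_sq_norm_inner_right x, Finset.mul_sum]
  refine Finset.sum_le_sum fun k _ => ?_
  have hbk : b k ≠ 0 := b.orthonormal.ne_zero k
  have hev : 0 ≤ ev k := by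
    have := hpos (b k)
    rw [hb, inner_smul_left, inner_self_eq_norm_sq_to_K, b.orthonormal.1 k] at this
    simpa using this
  rcases hev.eq_or_lt with h0 | h0
  · have : inner ℂ (b k) x = 0 := by
      refine (Submodule.mem_orthogonal _ _).mp hx _ ?_
      rw [LinearMap.mem_ker]
      have := hb k
      rw [← h0] at this
      simpa using this
    simp [this]
  · have : minNonzeroEig A ≤ ev k :=
      csInf_le ⟨0, fun c hc => hc.1.le⟩ ⟨h0, b k, hbk, hb k⟩
    gcongr

theorem stmt_5 {ι : Type*} [Fintype ι] [DecidableEq ι] {L : ℕ}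
    (P : ι → (E →L[ℂ] E)) (hproj : ∀ i, IsProjector (P i))
    (layer : ι → Fin L)
    (hcomm : ∀ i j, layer i = layer j → Commute (P i) (P j))
    (g : ℕ) (hg : 0 < g)
    (hgbound : ∀ i, Nat.card {j : ι // j ≠ i ∧ ¬ Commute (P i) (P j)} ≤ g)
    (hff : ∃ v : E, v ≠ 0 ∧ ∀ i, P i v = 0)
    (γ : ℝ) (hγ : γ = minNonzeroEig (∑ i, P i))
    (ψ : E) (hψ : ‖ψ‖ = 1) (hψG : ψ ∈ (LinearMap.ker ((∑ i, P i : E →L[ℂ] E) : E →ₗ[ℂ] E))ᗮ) :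
    ‖DLop P layer hcomm ψ‖ ^ 2 ≤ 1 / (1 + γ / (g : ℝ) ^ 2) := by
  classical
  have hγ0 : 0 ≤ γ := by
    rw [hγ]
    exact Real.sInf_nonneg (fun c hc => hc.1.le)
  obtain ⟨l, hl, hmem, hD⟩ := DLop_eq_list P layer hcomm
  rw [hD]
  let N : ι → Finset ι := fun i => Finset.univ.filter (fun j => j ≠ i ∧ ¬ Commute (P i) (P j))
  have hNc : ∀ i, (N i).card ≤ g := by
    intro i
    have := hgbound i
    rwa [Nat.card_eq_fintype_card, Fintype.card_subtype] at this
  have hNsymm : ∀ i j, i ∈ N j ↔ j ∈ N i := by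
    intro i j
    simp only [N, Finset.mem_filter, Finset.mem_univ, true_and]
    exact ⟨fun h => ⟨fun e => h.1 e.symm, fun c => h.2 c.symm⟩,
      fun h => ⟨fun e => h.1 e.symm, fun c => h.2 c.symm⟩⟩
  obtain ⟨w, hw0, -, hws, hwi⟩ := core_list P hproj N
    (fun i j h1 h2 => by simp [N, h1, h2]) ψ l hl
  have hsum : ∀ x, (inner ℂ ((∑ i, P i) x) x).re = ∑ i, ‖P i x‖ ^ 2 := by
    intro x
    rw [ContinuousLinearMap.sum_apply, sum_inner, Complex.re_sum]
    exact Finset.sum_congr rfl fun i _ => ((hproj i).norm_apply_sq x).symm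
  have hsa : IsSelfAdjoint (∑ i, P i) := by
    rw [isSelfAdjoint_iff, star_sum]
    exact Finset.sum_congr rfl fun i _ => (hproj i).1
  -- the image stays orthogonal to the ground space
  have horth : ∀ l : List ι, (l.map (fun i => 1 - P i)).prod ψ ∈
      (LinearMap.ker ((∑ i, P i : E →L[ℂ] E) : E →ₗ[ℂ] E))ᗮ := by
    intro l
    induction l with
    | nil => simpa using hψG
    | cons a l ih =>
      rw [Submodule.mem_orthogonal] at ih ⊢
      intro v hv
      have h0 : ∑ i, ‖P i v‖ ^ 2 = 0 := by
        rw [← hsum]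
        have : (∑ i, P i) v = 0 := hv
        rw [this]; simp
      have h1 : P a v = 0 := by
        have := (Finset.sum_eq_zero_iff_of_nonneg (fun i _ => sq_nonneg ‖P i v‖)).mp h0 a
          (Finset.mem_univ a)
        simpa using this
      have hs := ContinuousLinearMap.isSelfAdjoint_iff_isSymmetric.mp (hproj a).1
      have h2 : ∀ y, inner ℂ v (P a y) = 0 := by
        intro y
        have : inner ℂ (P a v) y = inner ℂ v (P a y) := hs v y
        rw [← this, h1, inner_zero_left]
      have := ih v hv
      simp only [List.map_cons, List.prod_cons, ContinuousLinearMap.mul_apply,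
        ContinuousLinearMap.sub_apply, ContinuousLinearMap.one_apply, inner_sub_right, h2, this,
        sub_zero]
  have hgap := gap_bound _ hsa
    (fun x => by rw [hsum]; exact Finset.sum_nonneg fun i _ => sq_nonneg _) _ (horth l)
  rw [hsum, ← hγ] at hgap
  set φ := (l.map (fun i => 1 - P i)).prod ψ with hφ
  have hup : ∑ i, ‖P i φ‖ ^ 2 ≤ (g : ℝ) ^ 2 * (1 - ‖φ‖ ^ 2) := by
    have hstep : ∀ i, ‖P i φ‖ ^ 2 ≤ (g : ℝ) * ∑ j ∈ N i, w j ^ 2 := by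
      intro i
      calc ‖P i φ‖ ^ 2 ≤ (∑ j ∈ N i, w j) ^ 2 := by
            have := hwi i (hmem i)
            gcongr
        _ ≤ (N i).card * ∑ j ∈ N i, w j ^ 2 := sq_sum_le_card_mul_sum_sq
        _ ≤ _ := by
            have : ((N i).card : ℝ) ≤ g := by exact_mod_cast hNc i
            have h2 : 0 ≤ ∑ j ∈ N i, w j ^ 2 := Finset.sum_nonneg fun j _ => sq_nonneg _
            gcongr
    calc ∑ i, ‖P i φ‖ ^ 2 ≤ ∑ i, (g : ℝ) * ∑ j ∈ N i, w j ^ 2 :=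
          Finset.sum_le_sum fun i _ => hstep i
      _ = (g : ℝ) * ∑ j, ∑ i ∈ N j, w j ^ 2 := by
          rw [← Finset.mul_sum]
          congr 1
          exact Finset.sum_comm' (fun i j => by simp [hNsymm i j])
      _ ≤ (g : ℝ) * ∑ j, (g : ℝ) * w j ^ 2 := by
          gcongr with j
          rw [Finset.sum_const, nsmul_eq_mul]
          have : ((N j).card : ℝ) ≤ g := by exact_mod_cast hNc j
          gcongr
      _ = (g : ℝ) ^ 2 * (1 - ‖φ‖ ^ 2) := by
          rw [← Finset.mul_sum, hws, hψ]; ring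
  have hg' : (0 : ℝ) < (g : ℝ) ^ 2 := by positivity
  rw [le_div_iff₀ (by positivity)]
  have : γ / (g : ℝ) ^ 2 * ‖φ‖ ^ 2 ≤ 1 - ‖φ‖ ^ 2 := by
    rw [div_mul_eq_mul_div, div_le_iff₀ hg']
    linarith
  linarith
end

section
/- (Converse to the detectability lemma for two layers.) Let P_1,…,P_p be pairwise commuting orthogonal projectors and Q_1,…,Q_q be pairwise commuting orthogonal projectors on a finite-dimensional complex Hilbert space (no commutation assumed between the two families). Set H = Σ_i P_i + Σ_j Q_j, Π_1 = ∏_i (1 − P_i), and Π_2 = ∏_j (1 − Q_j). Then for any unit vector ψ, ‖Π_1 Π_2 ψ‖² ≥ 1 − 3·⟨ψ, Hψ⟩. -/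
variable {E : Type*} [NormedAddCommGroup E] [InnerProductSpace ℂ E] [FiniteDimensional ℂ E]

theorem proj_inner {P : E →L[ℂ] E} (h : IsProjector P) (v : E) :
    (inner ℂ v (P v) : ℂ).re = ‖P v‖ ^ 2 := by
  have h1 : (inner ℂ (P v) (P v) : ℂ) = inner ℂ v (P (P v)) := by
    have := ContinuousLinearMap.adjoint_inner_left P (P v) v
    rw [ContinuousLinearMap.isSelfAdjoint_iff'.mp h.1] at this
    exact this
  have h2 : P (P v) = P v := by
    have := congrArg (fun T : E →L[ℂ] E => T v) h.2
    simpa using this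
  rw [h2] at h1
  rw [← h1, inner_self_eq_norm_sq_to_K]
  norm_cast

theorem proj_compl {P : E →L[ℂ] E} (h : IsProjector P) : IsProjector (1 - P) := by
  refine ⟨(IsSelfAdjoint.one _).sub h.1, ?_⟩
  have := h.2
  rw [sub_mul, mul_sub, mul_sub, this]
  simp

theorem proj_pyth {P : E →L[ℂ] E} (h : IsProjector P) (v : E) :
    ‖P v‖ ^ 2 + ‖(1 - P) v‖ ^ 2 = ‖v‖ ^ 2 := by
  rw [← proj_inner h, ← proj_inner (proj_compl h)]
  have : (inner ℂ v v : ℂ).re = ‖v‖ ^ 2 := by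
    rw [inner_self_eq_norm_sq_to_K]; norm_cast
  simp [inner_sub_right, this]
  norm_cast

theorem proj_le {P : E →L[ℂ] E} (h : IsProjector P) (v : E) : ‖P v‖ ≤ ‖v‖ := by
  have := proj_pyth h v
  exact (sq_le_sq₀ (norm_nonneg _) (norm_nonneg _)).mp (by nlinarith [sq_nonneg ‖(1 - P) v‖])

theorem layer {n : ℕ} (P : Fin n → (E →L[ℂ] E)) (hP : ∀ i, IsProjector (P i))
    (hc : ∀ i i', Commute (P i) (P i')) (ψ : E) (s : Finset (Fin n))
    (hcomm : (s : Set (Fin n)).Pairwise (Function.onFun Commute (fun i => 1 - P i))) :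
    IsProjector (s.noncommProd (fun i => 1 - P i) hcomm) ∧
    ‖ψ‖ ^ 2 - ‖(s.noncommProd (fun i => 1 - P i) hcomm) ψ‖ ^ 2 ≤
      ∑ i ∈ s, (inner ℂ ψ (P i ψ) : ℂ).re := by
  induction s using Finset.induction_on with
  | empty =>
    simp [IsProjector]
  | insert a s ha ih =>
    rw [Finset.noncommProd_insert_of_notMem _ _ _ _ ha, Finset.sum_insert ha]
    obtain ⟨h1, h2⟩ := ih (hcomm.mono (by simp))
    have hca : Commute (P a) (s.noncommProd (fun i => 1 - P i) (hcomm.mono (by simp))) :=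
      Finset.noncommProd_commute _ _ _ _ (fun i _ =>
        Commute.sub_right (Commute.one_right _) (hc a i))
    generalize s.noncommProd (fun i => 1 - P i) (hcomm.mono (by simp)) = A at *
    have hca' : Commute (1 - P a) A := Commute.sub_left (Commute.one_left _) hca
    have hp := proj_compl (hP a)
    refine ⟨⟨(hp.1.commute_iff h1.1).mp hca', ?_⟩, ?_⟩
    · rw [hca'.symm.mul_mul_mul_comm, hp.2, h1.2]
    · have e1 := proj_pyth (hP a) (A ψ)
      have e2 : P a (A ψ) = A (P a ψ) := by
        simpa using congrArg (fun T : E →L[ℂ] E => T ψ) hca.eq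
      have e3 := proj_le h1 (P a ψ)
      rw [proj_inner (hP a), ContinuousLinearMap.mul_apply]
      rw [e2] at e1
      have e4 := pow_le_pow_left₀ (norm_nonneg _) e3 2
      linarith

theorem two_proj {A B : E →L[ℂ] E} (hA : IsProjector A) (hB : IsProjector B) (v : E) :
    ‖v‖ ^ 2 - 3 * ((‖v‖ ^ 2 - ‖A v‖ ^ 2) + (‖v‖ ^ 2 - ‖B v‖ ^ 2)) ≤ ‖A (B v)‖ ^ 2 := by
  have a1 := proj_pyth hA v
  have b1 := proj_pyth hB v
  have c1 := proj_pyth hA (B v)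
  have e : (1 - A) (B v) = (1 - A) v - (1 - A) ((1 - B) v) := by simp; abel
  have d1 : ‖(1 - A) (B v)‖ ≤ ‖(1 - A) v‖ + ‖(1 - B) v‖ := by
    rw [e]
    exact (norm_sub_le _ _).trans (add_le_add le_rfl (proj_le (proj_compl hA) _))
  have d2 := pow_le_pow_left₀ (norm_nonneg _) d1 2
  nlinarith [sq_nonneg (‖(1 - A) v‖ - ‖(1 - B) v‖), sq_nonneg ‖(1 - A) v‖]

/-- Converse to the detectability lemma for two layers: let `P₁,…,P_p` and
`Q₁,…,Q_q` be two families of orthogonal projectors, each family pairwise commuting (no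
commutation assumed between the families). With `H = Σᵢ Pᵢ + Σⱼ Qⱼ`, `Π₁ = ∏ᵢ (1 − Pᵢ)` and
`Π₂ = ∏ⱼ (1 − Qⱼ)`, every unit vector `ψ` satisfies `‖Π₁ Π₂ ψ‖² ≥ 1 − 3·⟨ψ, Hψ⟩`. -/
theorem stmt_7 {p q : ℕ} (P : Fin p → (E →L[ℂ] E)) (Q : Fin q → (E →L[ℂ] E))
    (hPproj : ∀ i, IsProjector (P i)) (hQproj : ∀ j, IsProjector (Q j))
    (hPcomm : ∀ i i', Commute (P i) (P i')) (hQcomm : ∀ j j', Commute (Q j) (Q j'))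
    (ψ : E) (hψ : ‖ψ‖ = 1) :
    1 - 3 * (inner ℂ ψ ((∑ i, P i + ∑ j, Q j) ψ) : ℂ).re ≤
      ‖(Finset.univ.noncommProd (fun i => 1 - P i)
          (fun i _ i' _ _ =>
            Commute.sub_left (Commute.one_left _)
              (Commute.sub_right (Commute.one_right _) (hPcomm i i'))))
        ((Finset.univ.noncommProd (fun j => 1 - Q j)
          (fun j _ j' _ _ =>
            Commute.sub_left (Commute.one_left _)
              (Commute.sub_right (Commute.one_right _) (hQcomm j j')))) ψ)‖ ^ 2 := by
  have hp := layer P hPproj hPcomm ψ Finset.univ (fun i _ i' _ _ =>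
            Commute.sub_left (Commute.one_left _)
              (Commute.sub_right (Commute.one_right _) (hPcomm i i')))
  have hq := layer Q hQproj hQcomm ψ Finset.univ (fun j _ j' _ _ =>
            Commute.sub_left (Commute.one_left _)
              (Commute.sub_right (Commute.one_right _) (hQcomm j j')))
  have h := two_proj hp.1 hq.1 ψ
  have e : (inner ℂ ψ ((∑ i, P i + ∑ j, Q j) ψ) : ℂ).re =
      ∑ i, (inner ℂ ψ (P i ψ) : ℂ).re + ∑ j, (inner ℂ ψ (Q j ψ) : ℂ).re := by
    simp [inner_add_right, inner_sum, ContinuousLinearMap.sum_apply]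
  have h1 := hp.2
  have h2 := hq.2
  rw [e]
  rw [hψ] at h h1 h2
  linarith
end
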